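/- Let ω, S, A, B ∈ M with d ω = 0 and i S = 0. Assume: L ∘ i = i ∘ L (i.e. j = ι_{[Q,Q]} = 0, modeling that Q is cohomological, Q² = 0); i ω = d S + A (the BV-BFV relation ι_Q ω = δS + π*α^∂ with A modeling the pulled-back boundary one-form π*α^∂); and d B = i (d A) (B models π*S^∂, via the BFV relation δ S^∂ = ι_{Q^∂} ω^∂ pulled back along π). Suppose moreover that the element g := L S − 2 • B + i A satisfies e g = 0 and (d ∘ e + e ∘ d)(g) = g (g is a function of ghost number 1). Then L S = 2 • B − i A, the modified classical master equation L_Q S = π*(2 S^∂ − ι_{Q^∂} α^∂): the classical master equation is violated only by boundary terms. (Paper: equation (mCME), proved in Section 2.) -/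

import Mathlib

/-!
In the ring of endomorphisms of `M` the Lie derivative `L` is the commutator `⁅i, d⁆`. Evaluate it
on `i ω = d S + A`: since `L` commutes with `i` and `ω` is closed, `L (i ω) = -i (d A)`, while
expanding the sum gives `L (i ω) = -d (L S) + i (d A) - d (i A)`. Comparing the two,
`d (L S) = 2 • i (d A) - d (i A) = d (2 • B - i A)`, so the defect `g = L S - 2 • B + i A` is
closed. As `e g = 0`, the Lie derivative of `g` along the Euler vector field is `e (d g) = 0`; it is
also `g` times its ghost number, whence `g = 0`.
-/

theorem mul_lie_eq_neg_lie_mul {𝒜 : Type*} [Ring 𝒜] {d : 𝒜} (hdd : d * d = 0) (i : 𝒜) :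
    d * ⁅i, d⁆ = -(⁅i, d⁆ * d) := by
  rw [Ring.lie_def, mul_sub, sub_mul, ← mul_assoc d d, mul_assoc i, hdd, zero_mul, mul_zero,
    sub_zero, zero_sub, neg_neg, mul_assoc]

theorem eq_zero_of_anticommutator_apply_eq_smul {R M : Type*} [Semiring R] [AddCommMonoid M]
    [Module R M] {d e : Module.End R M} {c : R} {x : M} (hc : IsSMulRegular M c)
    (hdx : d x = 0) (hex : e x = 0) (hx : (d * e + e * d) x = c • x) : x = 0 := by
  apply hc.right_eq_zero_of_smul
  rw [← hx, LinearMap.add_apply, Module.End.mul_apply, Module.End.mul_apply, hdx, hex,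
    map_zero, map_zero, add_zero]

section LieDerivative

variable {R M : Type*} [Ring R] [AddCommGroup M] [Module R M] {d i : Module.End R M} {ω S A B : M}

theorem lie_apply_apply_of_closed (hcoh : Commute ⁅i, d⁆ i) (hω : d ω = 0) :
    ⁅i, d⁆ (i ω) = -i (d (i ω)) :=
  calc
    ⁅i, d⁆ (i ω) = i (⁅i, d⁆ ω) := LinearMap.congr_fun hcoh.eq ω
    _ = i (i (d ω) - d (i ω)) := rfl
    _ = -i (d (i ω)) := by rw [hω, map_zero, zero_sub, map_neg]

theorem d_lie_apply_of_contraction_eq (hdd : d * d = 0) (hcoh : Commute ⁅i, d⁆ i) (hω : d ω = 0)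
    (hBVBFV : i ω = d S + A) : d (⁅i, d⁆ S) = 2 • i (d A) - d (i A) := by
  have hdiω : d (i ω) = d A := by
    have hddS : d (d S) = 0 := LinearMap.congr_fun hdd S
    rw [hBVBFV, map_add, hddS, zero_add]
  have hLdS : d (⁅i, d⁆ S) = -⁅i, d⁆ (d S) :=
    LinearMap.congr_fun (mul_lie_eq_neg_lie_mul hdd i) S
  have hLA : ⁅i, d⁆ A = i (d A) - d (i A) := rfl
  calc
    d (⁅i, d⁆ S) = ⁅i, d⁆ A - ⁅i, d⁆ (i ω) := by rw [hLdS, hBVBFV, map_add]; abel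
    _ = i (d A) - d (i A) + i (d A) := by
      rw [lie_apply_apply_of_closed hcoh hω, hdiω, hLA, sub_neg_eq_add]
    _ = 2 • i (d A) - d (i A) := by abel

theorem modified_CME_general {e : Module.End R M} {c : R} (hc : IsSMulRegular M c)
    (hdd : d * d = 0) (hω : d ω = 0) (hcoh : Commute ⁅i, d⁆ i)
    (hBVBFV : i ω = d S + A) (hB : d B = i (d A))
    (hfun : e (⁅i, d⁆ S - 2 • B + i A) = 0)
    (hgh : (d * e + e * d) (⁅i, d⁆ S - 2 • B + i A) = c • (⁅i, d⁆ S - 2 • B + i A)) :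
    ⁅i, d⁆ S = 2 • B - i A := by
  have hclosed : d (⁅i, d⁆ S - 2 • B + i A) = 0 := by
    rw [map_add, map_sub, map_nsmul, hB, d_lie_apply_of_contraction_eq hdd hcoh hω hBVBFV]
    abel
  have hzero := eq_zero_of_anticommutator_apply_eq_smul hc hclosed hfun hgh
  rwa [← sub_eq_zero, ← sub_add]

end LieDerivative

/-- The modified classical master equation
`L_Q S = π*(2 S^∂ - ι_{Q^∂} α^∂)`: the classical master equation is violated
only by boundary terms.  Here `d` models `δ`, `i` models `ι_Q`,
`L := i ∘ d - d ∘ i` models `L_Q`, `Q` is cohomological (`L ∘ i = i ∘ L`,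
i.e. `ι_{[Q,Q]} = 0`), `A` models the pulled-back boundary one-form
`π* α^∂` in `ι_Q ω = δ S + π* α^∂`, `B` models `π* S^∂` via
`δ B = ι_Q (δ A)`, and `e` models the contraction with the Euler vector
field. -/
theorem modified_CME
    {M : Type*} [AddCommGroup M] [Module ℝ M]
    (d i e : M →ₗ[ℝ] M)
    (hdd : d ∘ₗ d = 0)
    (ω S A B : M)
    (hω : d ω = 0)
    (hiS : i S = 0)
    (L : M →ₗ[ℝ] M) (hL : L = i ∘ₗ d - d ∘ₗ i)
    (hcoh : L ∘ₗ i = i ∘ₗ L)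
    (hBVBFV : i ω = d S + A)
    (hB : d B = i (d A))
    (g : M) (hg : g = L S - 2 • B + i A)
    (hfun : e g = 0)
    (hgh : (d ∘ₗ e + e ∘ₗ d) g = g) :
    L S = 2 • B - i A := by
  subst hL hg
  exact modified_CME_general (.one M) hdd hω hcoh hBVBFV hB hfun (hgh.trans (one_smul ℝ _).symm)
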